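/- arXiv:2212.14792 — 2 statements merged into one kernel-verified Lean document; each statement's English description precedes it below -/
import Mathlib

section
/- Fix a vertex v of Γ and an integer t ≥ 1. Then the maximal graded ideal of R_v is an associated prime of R_v/I_v^t if and only if the maximal graded ideal of S is an associated prime of S/J^t, where J is the edge ideal of the induced subgraph Γ_{V∖N[v]} in S = k[x_i : i ∉ N[v]]. -/
open MvPolynomial

noncomputable section

/-- The edge ideal of a graph `Γ` on vertex set `σ`, in `k[x_i : i ∈ σ]`. -/
def edgeIdeal (k : Type) [Field k] {σ : Type} (Γ : SimpleGraph σ) :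
    Ideal (MvPolynomial σ k) :=
  Ideal.span { m | ∃ i j : σ, Γ.Adj i j ∧ m = X i * X j }

/-- The maximal graded ideal `(x_i : i ∈ σ)` of `k[x_i : i ∈ σ]`. -/
def maxIdeal (k : Type) [Field k] (σ : Type) : Ideal (MvPolynomial σ k) :=
  Ideal.span (Set.range (X : σ → MvPolynomial σ k))

/-- `depth R/J = 0`, i.e. the maximal graded ideal is an associated prime of `R/J`. -/
def DepthZero (k : Type) [Field k] {σ : Type} (J : Ideal (MvPolynomial σ k)) : Prop :=
  maxIdeal k σ ∈ associatedPrimes (MvPolynomial σ k) (MvPolynomial σ k ⧸ J)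

/-- The `i`-th local cohomology of `R/J` with support in the maximal graded ideal. -/
def locCoh (k : Type) [Field k] {σ : Type} (J : Ideal (MvPolynomial σ k)) (i : ℕ) :=
  (localCohomology (maxIdeal k σ) i).obj (ModuleCat.of _ (MvPolynomial σ k ⧸ J))

/-- `depth R/J`, defined as the least `i` with `H^i_m(R/J) ≠ 0`. -/
def rDepth (k : Type) [Field k] {σ : Type} (J : Ideal (MvPolynomial σ k)) : ℕ :=
  sInf { i | Nontrivial (locCoh k J i) }

/-- A set `U` of vertices is dominating: every vertex outside `U` is adjacent to a
vertex of `U`. -/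
def Dominating {σ : Type} (Γ : SimpleGraph σ) (U : Set σ) : Prop :=
  ∀ v ∉ U, ∃ u ∈ U, Γ.Adj u v

/-- The closed neighborhood `N[v]` of a vertex. -/
def closedNbhd {σ : Type} (Γ : SimpleGraph σ) (v : σ) : Set σ :=
  insert v { u | Γ.Adj v u }

/-- The closed neighborhood `N[C]` of a set of vertices. -/
def closedNbhdSet {σ : Type} (Γ : SimpleGraph σ) (C : Set σ) : Set σ :=
  ⋃ v ∈ C, closedNbhd Γ v

/-- An odd cycle of length `m` (given as an injective map `ZMod m → σ` with consecutive
vertices adjacent) in `Γ`. -/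
def IsOddCycle {σ : Type} (Γ : SimpleGraph σ) (m : ℕ) (c : ZMod m → σ) : Prop :=
  Odd m ∧ 3 ≤ m ∧ Function.Injective c ∧ ∀ i, Γ.Adj (c i) (c (i + 1))

/-- `F` is an independent set of `Γ`. -/
def IsIndep {σ : Type} [Fintype σ] [DecidableEq σ] (Γ : SimpleGraph σ) (F : Finset σ) : Prop :=
  ∀ i ∈ F, ∀ j ∈ F, ¬ Γ.Adj i j

/-- `F` is a maximal independent set of `Γ`. -/
def IsMaxIndep {σ : Type} [Fintype σ] [DecidableEq σ] (Γ : SimpleGraph σ) (F : Finset σ) : Prop :=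
  IsIndep Γ F ∧ ∀ G : Finset σ, IsIndep Γ G → F ⊆ G → G = F

/-- The prime ideal `P_F = (x_i : i ∉ F)`. -/
def PF (k : Type) [Field k] {σ : Type} [Fintype σ] [DecidableEq σ] (F : Finset σ) :
    Ideal (MvPolynomial σ k) :=
  Ideal.span { m | ∃ i ∉ F, m = X i }

/-- The `t`-th symbolic power `I^{(t)} = ⋂_{F maximal independent} P_F^t` of the edge ideal. -/
def symbPow (k : Type) [Field k] {σ : Type} [Fintype σ] [DecidableEq σ]
    (Γ : SimpleGraph σ) (t : ℕ) : Ideal (MvPolynomial σ k) :=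
  ⨅ F ∈ { F : Finset σ | IsMaxIndep Γ F }, PF k F ^ t

/-- The monomial `x^a`. -/
def xPow (k : Type) [Field k] {σ : Type} [Fintype σ] (a : σ → ℕ) : MvPolynomial σ k :=
  ∏ i, X i ^ a i

/-- The localization `R[x_i^{-1} : i ∈ F]`. -/
abbrev locAt (k : Type) [Field k] {σ : Type} (F : Finset σ) :=
  Localization (Submonoid.closure ((fun i => (X i : MvPolynomial σ k)) '' (F : Set σ)))

/-- The degree complex `Δ_a(J) = {F : x^a ∉ J·R[x_i^{-1} : i ∈ F]}` of a monomial ideal `J`. -/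
def degComplex (k : Type) [Field k] {σ : Type} [Fintype σ] (J : Ideal (MvPolynomial σ k))
    (a : σ → ℕ) : Set (Finset σ) :=
  { F | algebraMap (MvPolynomial σ k) (locAt k F) (xPow k a) ∉
      J.map (algebraMap (MvPolynomial σ k) (locAt k F)) }

/-- `F` is a facet (maximal face) of the complex `Δ`. -/
def IsFacet {σ : Type} (Δ : Set (Finset σ)) (F : Finset σ) : Prop :=
  F ∈ Δ ∧ ∀ G ∈ Δ, F ⊆ G → G = F

/-- The complex `Δ` is disconnected: its vertex set splits into two nonempty parts such that
no face meets both. -/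
def ComplexDisconnected {σ : Type} (Δ : Set (Finset σ)) : Prop :=
  ∃ A B : Set σ, A.Nonempty ∧ B.Nonempty ∧ Disjoint A B ∧
    (∀ i, {i} ∈ Δ ↔ i ∈ A ∪ B) ∧
    ∀ F ∈ Δ, ¬ ((∃ i ∈ F, i ∈ A) ∧ (∃ j ∈ F, j ∈ B))

/-- The polynomial ring `R_v = k[x_i : i ≠ v]`. -/
abbrev Rv (k : Type) [Field k] {σ : Type} (v : σ) := MvPolynomial { i : σ // i ≠ v } k

/-- The localization `R[x_v^{-1}]`. -/
abbrev LocAway (k : Type) [Field k] {σ : Type} (v : σ) :=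
  Localization.Away (X v : MvPolynomial σ k)

/-- For an ideal `I` of `R`, the ideal `I_v = I·R[x_v^{-1}] ∩ R_v` of `R_v`. -/
def idealV (k : Type) [Field k] {σ : Type} (I : Ideal (MvPolynomial σ k)) (v : σ) :
    Ideal (Rv k v) :=
  Ideal.comap ((algebraMap (MvPolynomial σ k) (LocAway k v)).comp
      (MvPolynomial.rename (Subtype.val : { i : σ // i ≠ v } → σ)).toRingHom)
    (I.map (algebraMap (MvPolynomial σ k) (LocAway k v)))

/-- The edge ideal of the induced subgraph `Γ_U` in `k[x_i : i ∈ U]`. -/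
def edgeIdealOn (k : Type) [Field k] {σ : Type} (Γ : SimpleGraph σ) (U : Set σ) :
    Ideal (MvPolynomial U k) :=
  Ideal.span { m | ∃ i j : U, Γ.Adj (i : σ) (j : σ) ∧ m = X i * X j }

/-- `Γ` has no isolated vertices. -/
def NoIsolated {σ : Type} (Γ : SimpleGraph σ) : Prop :=
  ∀ v : σ, ∃ u : σ, Γ.Adj v u

/-!
Localizing at `x_v` amounts to setting `x_v = 1`, so `I_v = J + (x_y : y ∈ N(v))`. For a monomial
ideal, the maximal graded ideal is associated to the quotient exactly when some monomial outside the
ideal is multiplied into it by every variable. A monomial whose degree in the variables `x_y` is `q`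
lies in `(J + (x_y))^t` if and only if its remaining factor lies in `J^(t - q)`; hence the maximal
graded ideal is associated to `R_v / I_v^t` if and only if it is associated to `S / J^s` for some
`1 ≤ s ≤ t`.

It remains to see that this property of `S / J^s` persists as `s` grows. A monomial `x^a` lies in
`J^s` if and only if there are `s` edges, with repetition, of total degree at most `a` at each
vertex. When `x^a` is a socle monomial, there is an edge each end of which is missed by a maximum
such matching, and Gallai's lemma shows that multiplying `x^a` by this edge gives a socle monomial
for the next power.
-/

section Packs

variable {σ : Type*}

/-- `s` exponent vectors from `G`, repetitions allowed, fit together with `c` below `a`. If `I` is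
the ideal generated by the monomials with exponents in `G`, this says `x^a ∈ x^c I^s`; if `G`
consists of the edges of a graph, it gives a matching of size `s` within the vertex capacities `a`
that leaves room for `c`. -/
def Packs (G : Set (σ →₀ ℕ)) (s : ℕ) (c a : σ →₀ ℕ) : Prop :=
  ∃ E : Multiset (σ →₀ ℕ), (∀ e ∈ E, e ∈ G) ∧ E.card = s ∧ E.sum + c ≤ a

namespace Packs

variable {G : Set (σ →₀ ℕ)} {s t : ℕ} {a b c d e : σ →₀ ℕ}

theorem of_zero (h : c ≤ a) : Packs G 0 c a :=
  ⟨0, by simpa using h⟩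

theorem mono (hdc : d ≤ c) (hab : a ≤ b) : Packs G s c a → Packs G s d b := by
  rintro ⟨E, hEG, hE, hEa⟩
  exact ⟨E, hEG, hE, (add_le_add_right hdc _).trans (hEa.trans hab)⟩

theorem anti (hst : s ≤ t) : Packs G t c a → Packs G s c a := by
  rintro ⟨E, hEG, rfl, hEa⟩
  obtain ⟨E', hE'⟩ := Multiset.card_pos_iff_exists_mem.1
    ((Multiset.card_powersetCard s E).symm ▸ Nat.choose_pos hst)
  obtain ⟨hle, hcard⟩ := Multiset.mem_powersetCard.1 hE'
  obtain ⟨D, rfl⟩ := Multiset.le_iff_exists_add.1 hle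
  refine ⟨E', fun e he => hEG e (Multiset.mem_of_le hle he), hcard, le_trans ?_ hEa⟩
  rw [Multiset.sum_add]
  gcongr
  exact le_self_add

theorem cons (he : e ∈ G) : Packs G s (c + e) a → Packs G (s + 1) c a := by
  rintro ⟨E, hEG, rfl, hEa⟩
  refine ⟨e ::ₘ E, by simpa using ⟨he, hEG⟩, by simp, ?_⟩
  rwa [Multiset.sum_cons, add_comm e, add_assoc, add_comm e]

theorem add_generator (he : e ∈ G) : Packs G s c a → Packs G (s + 1) c (a + e) := by
  rintro ⟨E, hEG, hE, hEa⟩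
  exact cons he ⟨E, hEG, hE, by rw [← add_assoc]; gcongr⟩

end Packs

theorem exists_mem_sub_of_sum_apply_lt [DecidableEq (σ →₀ ℕ)] {E F : Multiset (σ →₀ ℕ)} {z : σ}
    (h : F.sum z < E.sum z) : ∃ e ∈ E - F, e z ≠ 0 := by
  by_contra! hzero
  have hsub : (E - F).sum z = 0 := by
    rw [← Finsupp.applyAddHom_apply, map_multiset_sum]
    exact Multiset.sum_eq_zero (by simpa using hzero)
  obtain ⟨D, hD⟩ := Multiset.le_iff_exists_add.1 (le_add_tsub : E ≤ F + (E - F))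
  have := congrArg (fun M => M.sum z) hD
  simp only [Multiset.sum_add, Finsupp.add_apply, hsub] at this
  omega

theorem exists_eq_single_add_single_of_degree_eq_two {e : σ →₀ ℕ} (he : e.degree = 2) {z : σ}
    (hz : e z ≠ 0) : ∃ y, e = Finsupp.single z 1 + Finsupp.single y 1 := by
  have hle : Finsupp.single z 1 ≤ e := by simpa [Nat.one_le_iff_ne_zero] using hz
  have hdeg : (e - Finsupp.single z 1).degree = 1 := by
    have := congrArg Finsupp.degree (add_tsub_cancel_of_le hle)
    rw [map_add, Finsupp.degree_single, he] at this
    omega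
  obtain ⟨y, hy⟩ := Finsupp.range_single_one.ge hdeg
  exact ⟨y, by rw [show Finsupp.single y 1 = _ from hy, add_tsub_cancel_of_le hle]⟩

theorem cons_erase_le_add {α : Type*} [DecidableEq α] {E F E₀ : Multiset α} {e f : α}
    (hE : E ≤ E₀ + F) (hf : f ∈ F - E.erase e) : f ::ₘ E.erase e ≤ E₀ + F := by
  rw [Multiset.mem_sub] at hf
  refine Multiset.le_iff_count.2 fun x => ?_
  have := Multiset.le_iff_count.1 hE x
  have := Multiset.count_le_of_le x (Multiset.erase_le e E)
  rw [Multiset.count_cons, Multiset.count_add] at *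
  split_ifs with h
  · subst h; omega
  · omega

theorem card_sub_cons_erase_lt {α : Type*} [DecidableEq α] {E F : Multiset α} {e f : α}
    (he : e ∈ E - F) (hf : f ∈ F - E.erase e) :
    (F - f ::ₘ E.erase e).card < (F - E).card := by
  have hsub : F - E.erase e = F - E := by
    ext x
    rw [Multiset.mem_sub] at he
    rw [Multiset.count_sub, Multiset.count_sub]
    by_cases hx : x = e
    · subst hx; rw [Multiset.count_erase_self]; omega
    · rw [Multiset.count_erase_of_ne hx]
  rw [Multiset.sub_cons, ← Multiset.sub_singleton, tsub_right_comm, Multiset.sub_singleton, hsub]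
  exact Multiset.card_erase_lt_of_mem (hsub ▸ hf)

section Gallai

open Finsupp (single)

/-- `E` is obtained from `E₀` by exchanging, along an alternating walk from `v` to `z`, members of
`E₀` for members of `F`. Only the effect on degrees is recorded: the walk frees one unit at `v` and
uses one more unit at `z`. -/
structure IsAlternatingSwap (E₀ F : Multiset (σ →₀ ℕ)) (v z : σ) (E : Multiset (σ →₀ ℕ)) :
    Prop where
  le_add : E ≤ E₀ + F
  card_eq : E.card = E₀.card
  sum_add_single : E.sum + single v 1 = E₀.sum + single z 1

variable {G : Set (σ →₀ ℕ)} {r : ℕ} {a : σ →₀ ℕ} {E₀ E F : Multiset (σ →₀ ℕ)} {u v w y z : σ}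

/-- The complementary packing `E₀ + F - E` misses `z`, so if `y` were not saturated by `F`, then
adding the edge `zy` to it would contradict maximality. -/
theorem IsAlternatingSwap.sum_erase_apply_lt [DecidableEq (σ →₀ ℕ)]
    (hswap : IsAlternatingSwap E₀ F v z E) (hmax : ¬ Packs G (F.card + 1) 0 a)
    (hG : ∀ e ∈ E₀ + F, e ∈ G) (hE₀a : E₀.sum ≤ a) (hFa : F.sum + single v 1 ≤ a)
    (he : single z 1 + single y 1 ∈ E) :
    (E.erase (single z 1 + single y 1)).sum y < F.sum y := by
  by_contra! hFy
  obtain ⟨D, hD⟩ := Multiset.le_iff_exists_add.1 hswap.le_add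
  have hDG : ∀ d ∈ D, d ∈ G := fun d hd => hG d (hD ▸ Multiset.mem_add.2 (.inr hd))
  have hDcard : D.card = F.card := by
    have := congrArg Multiset.card hD
    rw [Multiset.card_add, Multiset.card_add, hswap.card_eq] at this
    omega
  have hDsum : D.sum + single z 1 = F.sum + single v 1 := by
    have := congrArg Multiset.sum hD
    rw [Multiset.sum_add, Multiset.sum_add] at this
    apply add_left_cancel (a := E₀.sum)
    rw [add_left_comm, ← hswap.sum_add_single, ← add_assoc E₀.sum, this]
    abel
  have heG := hG _ (Multiset.mem_of_le hswap.le_add he)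
  refine hmax (Packs.cons heG ⟨D, hDG, hDcard, ?_⟩)
  rw [zero_add, ← add_assoc, hDsum]
  intro x
  have hFx := hFa x
  by_cases hx : x = y
  · subst hx
    have hswapx := DFunLike.congr_fun hswap.sum_add_single x
    have herase := DFunLike.congr_fun (Multiset.sum_erase he) x
    have hE₀x := hE₀a x
    simp only [Finsupp.add_apply, Finsupp.single_eq_same] at *
    omega
  · simpa [Finsupp.single_eq_of_ne hx] using hFx

theorem IsAlternatingSwap.exists_card_sub_lt [DecidableEq (σ →₀ ℕ)]
    (hswap : IsAlternatingSwap E₀ F v z E) (hdeg : ∀ e ∈ G, e.degree = 2)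
    (hmax : ¬ Packs G (F.card + 1) 0 a) (hG : ∀ e ∈ E₀ + F, e ∈ G) (hE₀a : E₀.sum ≤ a)
    (hFa : F.sum + single v 1 ≤ a) (hz : F.sum z < E.sum z) :
    ∃ E' z', IsAlternatingSwap E₀ F v z' E' ∧ (F - E').card < (F - E).card := by
  obtain ⟨e, heEF, hez⟩ := exists_mem_sub_of_sum_apply_lt hz
  have heE : e ∈ E := Multiset.mem_of_le (Multiset.sub_le_self E F) heEF
  have hedeg : e.degree = 2 := hdeg e (hG e (Multiset.mem_of_le hswap.le_add heE))
  obtain ⟨y, rfl⟩ := exists_eq_single_add_single_of_degree_eq_two hedeg hez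
  obtain ⟨f, hf, hfy⟩ := exists_mem_sub_of_sum_apply_lt
    (hswap.sum_erase_apply_lt hmax hG hE₀a hFa heE)
  have hfF : f ∈ F := Multiset.mem_of_le (Multiset.sub_le_self F _) hf
  have hfdeg : f.degree = 2 := hdeg f (hG f (Multiset.mem_add.2 (.inr hfF)))
  obtain ⟨z', rfl⟩ := exists_eq_single_add_single_of_degree_eq_two hfdeg hfy
  refine ⟨_, z', ⟨cons_erase_le_add hswap.le_add hf, ?_, ?_⟩, card_sub_cons_erase_lt heEF hf⟩
  · rw [Multiset.card_cons, Multiset.card_erase_add_one heE, hswap.card_eq]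
  · apply add_right_cancel (b := single z 1)
    rw [add_right_comm E₀.sum, ← hswap.sum_add_single, ← Multiset.sum_erase heE,
      Multiset.sum_cons]
    abel

theorem IsAlternatingSwap.packs_or_packs (hdeg : ∀ e ∈ G, e.degree = 2)
    (hmax : ¬ Packs G (F.card + 1) 0 a) (hG : ∀ e ∈ E₀ + F, e ∈ G) (hcard : E₀.card = F.card)
    (hE₀a : E₀.sum + (single u 1 + single w 1) ≤ a) (hFa : F.sum + single v 1 ≤ a)
    (hswap : IsAlternatingSwap E₀ F v z E) :
    Packs G F.card (single u 1 + single v 1) a ∨ Packs G F.card (single v 1 + single w 1) a := by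
  classical
  induction hn : (F - E).card using Nat.strong_induction_on generalizing E z with
  | _ n ih =>
  have hEG : ∀ e ∈ E, e ∈ G := fun e he => hG e (Multiset.mem_of_le hswap.le_add he)
  have hEcard : E.card = F.card := hswap.card_eq.trans hcard
  have hEsum := hswap.sum_add_single
  by_cases hzu : z = u
  · right
    refine ⟨E, hEG, hEcard, ?_⟩
    rwa [← add_assoc, hEsum, hzu, add_assoc]
  by_cases hzroom : E₀.sum + (single z 1 + single u 1) ≤ a
  · left
    refine ⟨E, hEG, hEcard, ?_⟩
    rwa [add_comm (single u 1), ← add_assoc, hEsum, add_assoc]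
  have hzsat : a z ≤ E₀.sum z := by
    by_contra! hlt
    refine hzroom fun x => ?_
    have := hE₀a x
    by_cases hx : x = z
    · subst hx
      simpa [Finsupp.single_eq_of_ne hzu] using hlt
    · simp only [Finsupp.add_apply, Finsupp.single_eq_of_ne hx] at *
      omega
  have hFz : F.sum z < E.sum z := by
    have hFaz := hFa z
    have hEz := DFunLike.congr_fun hEsum z
    simp only [Finsupp.add_apply, Finsupp.single_eq_same] at *
    omega
  obtain ⟨E', z', hswap', hlt⟩ :=
    hswap.exists_card_sub_lt hdeg hmax hG (le_self_add.trans hE₀a) hFa hFz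
  exact ih _ (hn ▸ hlt) hswap' rfl

/-- Gallai's lemma: for a maximum matching, "never missed together" is transitive on the vertices
that some maximum matching misses. -/
theorem Packs.packs_single_add_single_or (hdeg : ∀ e ∈ G, e.degree = 2)
    (hmax : ¬ Packs G (r + 1) 0 a) (hv : Packs G r (single v 1) a)
    (huw : Packs G r (single u 1 + single w 1) a) :
    Packs G r (single u 1 + single v 1) a ∨ Packs G r (single v 1 + single w 1) a := by
  obtain ⟨F, hFG, rfl, hFa⟩ := hv
  obtain ⟨E₀, hE₀G, hcard, hE₀a⟩ := huw
  refine IsAlternatingSwap.packs_or_packs (E := E₀) (z := v) hdeg hmax ?_ hcard hE₀a hFa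
    ⟨le_self_add, rfl, rfl⟩
  exact fun e he => (Multiset.mem_add.1 he).elim (hE₀G e) (hFG e)

end Gallai

section Persistence

open Finsupp (single)

variable {G : Set (σ →₀ ℕ)} {r s t : ℕ} {a c : σ →₀ ℕ} {d i y : σ}

theorem Packs.exists_single_add_single_mem (hdeg : ∀ e ∈ G, e.degree = 2)
    (hmax : ¬ Packs G (r + 1) 0 a) (h : Packs G (r + 1) c (a + single i 1)) :
    ∃ y, single i 1 + single y 1 ∈ G ∧ Packs G r (c + single y 1) a := by
  classical
  obtain ⟨E, hEG, hE, hEa⟩ := h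
  have hEi : (0 : Multiset (σ →₀ ℕ)).sum i < E.sum i := by
    by_contra! hzero
    refine hmax ⟨E, hEG, hE, fun x => ?_⟩
    have := hEa x
    by_cases hx : x = i
    · subst hx
      simp_all
    · simp only [Finsupp.add_apply, Finsupp.single_eq_of_ne hx, Finsupp.zero_apply] at *
      omega
  obtain ⟨e, heE, hei⟩ := exists_mem_sub_of_sum_apply_lt hEi
  rw [tsub_zero] at heE
  obtain ⟨y, rfl⟩ := exists_eq_single_add_single_of_degree_eq_two (hdeg e (hEG e heE)) hei
  refine ⟨y, hEG _ heE, E.erase (single i 1 + single y 1),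
    fun e he => hEG e (Multiset.mem_of_mem_erase he), ?_, ?_⟩
  · rw [Multiset.card_erase_of_mem heE, hE, Nat.pred_succ]
  · apply le_of_add_le_add_right (a := single i 1)
    refine le_of_eq_of_le ?_ hEa
    rw [← Multiset.sum_erase heE]
    abel

theorem Packs.of_succ_of_add_single (hdeg : ∀ e ∈ G, e.degree = 2)
    (h : Packs G (s + 1) 0 (a + single i 1)) : Packs G s 0 a := by
  by_cases hs : Packs G (s + 1) 0 a
  · exact hs.anti s.le_succ
  · obtain ⟨y, -, hy⟩ := h.exists_single_add_single_mem hdeg hs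
    exact hy.mono zero_le le_rfl

/-- `a` is the exponent of a monomial in the socle of `R / I^t`, that is, of one outside `I^t` that
every variable multiplies into `I^t`; here `I` is generated by the monomials with exponents
in `G`. -/
def IsSocleExponent (G : Set (σ →₀ ℕ)) (t : ℕ) (a : σ →₀ ℕ) : Prop :=
  ¬ Packs G t 0 a ∧ ∀ i, Packs G t 0 (a + single i 1)

theorem IsSocleExponent.pos (h : IsSocleExponent G t a) : 0 < t :=
  Nat.pos_of_ne_zero fun ht => h.1 (ht ▸ Packs.of_zero zero_le)

/-- If the matching number within `a` rose by two, maximum matchings within `a` would miss a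
neighbour of `d` together with a neighbour of `y`. Applying Gallai's lemma at `d` and then at `y`,
some maximum matching would miss both ends of an edge. -/
theorem not_packs_add_two_add_edge (hdeg : ∀ e ∈ G, e.degree = 2)
    (hmax : ¬ Packs G (r + 1) 0 a) (hd : Packs G r (single d 1) a) (hy : Packs G r (single y 1) a)
    (hdy : single d 1 + single y 1 ∈ G) :
    ¬ Packs G (r + 2) 0 (a + (single d 1 + single y 1)) := by
  have not_adj {p q : σ} (hpq : single p 1 + single q 1 ∈ G) :
      ¬ Packs G r (single p 1 + single q 1) a :=
    fun h => hmax (.cons hpq (by rwa [zero_add]))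
  intro h
  have hmax' : ¬ Packs G (r + 2) 0 (a + single y 1) := fun h => hmax (h.of_succ_of_add_single hdeg)
  rw [add_comm (single d 1), ← add_assoc] at h
  obtain ⟨u, hdu, hu⟩ := h.exists_single_add_single_mem hdeg hmax'
  obtain ⟨w, hyw, huw⟩ := hu.exists_single_add_single_mem hdeg hmax
  rw [zero_add] at huw
  rcases Packs.packs_single_add_single_or hdeg hmax hd huw with hud | hdw
  · exact not_adj hdu (add_comm (single u 1) _ ▸ hud)
  · rcases Packs.packs_single_add_single_or hdeg hmax hy hdw with h | h
    · exact not_adj hdy h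
    · exact not_adj hyw h

theorem IsSocleExponent.exists_succ (hdeg : ∀ e ∈ G, e.degree = 2)
    (h : IsSocleExponent G t a) : ∃ b, IsSocleExponent G (t + 1) b := by
  obtain ⟨r, rfl⟩ := Nat.exists_eq_add_one.2 h.pos
  obtain ⟨hmax, hsocle⟩ := h
  have missed (i : σ) : ∃ y, single i 1 + single y 1 ∈ G ∧ Packs G r (single y 1) a := by
    simpa using (hsocle i).exists_single_add_single_mem hdeg hmax
  rcases isEmpty_or_nonempty σ with _ | ⟨⟨i⟩⟩
  · exact ⟨a, fun h => hmax (h.anti (r + 1).le_succ), isEmptyElim⟩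
  obtain ⟨d, -, hd⟩ := missed i
  obtain ⟨y, hdy, hy⟩ := missed d
  refine ⟨a + (single d 1 + single y 1), not_packs_add_two_add_edge hdeg hmax hd hy hdy,
    fun j => ?_⟩
  rw [add_right_comm a]
  exact (hsocle j).add_generator hdy

theorem IsSocleExponent.exists_of_le (hdeg : ∀ e ∈ G, e.degree = 2) (hst : s ≤ t)
    (h : IsSocleExponent G s a) : ∃ b, IsSocleExponent G t b := by
  induction t, hst using Nat.le_induction with
  | base => exact ⟨a, h⟩
  | succ t _ ih => exact ih.elim fun _ hb => hb.exists_succ hdeg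

end Persistence

end Packs

section AdjoinVars

open Finsupp (single mapDomain)

variable {σ τ : Type*} {ι : σ ↪ τ} {G : Set (σ →₀ ℕ)} {t : ℕ}

/-- The exponents of the generators of `J + (x_y : y ∉ range ι)`, where `J` is generated by the
monomials with exponents in `G` and its variables are identified with those in `range ι`. -/
def adjoinVars (ι : σ ↪ τ) (G : Set (σ →₀ ℕ)) : Set (τ →₀ ℕ) :=
  mapDomain ι '' G ∪ (single · 1) '' (Set.range ι)ᶜ

open Classical in
/-- The degree of a monomial in the variables outside `range ι`, as a function of its exponent. -/
def outerDegree (ι : σ ↪ τ) : (τ →₀ ℕ) →+ ℕ :=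
  Finsupp.degree.comp (Finsupp.filterAddHom (· ∉ Set.range ι))

/-- The part of an exponent vector in the variables from `range ι`. -/
def innerExponent (ι : σ ↪ τ) : (τ →₀ ℕ) →+ (σ →₀ ℕ) :=
  Finsupp.comapDomain.addMonoidHom ι.injective

theorem innerExponent_apply (b : τ →₀ ℕ) (i : σ) : innerExponent ι b i = b (ι i) := rfl

theorem innerExponent_mono {b c : τ →₀ ℕ} (h : b ≤ c) : innerExponent ι b ≤ innerExponent ι c :=
  fun i => h (ι i)

theorem outerDegree_mono {b c : τ →₀ ℕ} (h : b ≤ c) : outerDegree ι b ≤ outerDegree ι c := by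
  obtain ⟨d, rfl⟩ := exists_add_of_le h
  rw [map_add]
  exact Nat.le_add_right _ _

theorem innerExponent_mapDomain (a : σ →₀ ℕ) : innerExponent ι (mapDomain ι a) = a :=
  Finsupp.comapDomain_mapDomain ι ι.injective a

theorem outerDegree_mapDomain (a : σ →₀ ℕ) : outerDegree ι (mapDomain ι a) = 0 := by
  classical
  have hfilter : (mapDomain ι a).filter (· ∉ Set.range ι) = 0 :=
    (Finsupp.filter_eq_zero_iff _ _).2 fun y hy => Finsupp.mapDomain_of_notMem_range a y hy
  exact (congrArg Finsupp.degree hfilter).trans (map_zero _)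

theorem innerExponent_single {y : τ} (hy : y ∉ Set.range ι) (n : ℕ) :
    innerExponent ι (single y n) = 0 := by
  ext i
  rw [innerExponent_apply, Finsupp.single_eq_of_ne fun h => hy ⟨i, h⟩, Finsupp.zero_apply]

theorem outerDegree_single {y : τ} (hy : y ∉ Set.range ι) (n : ℕ) :
    outerDegree ι (single y n) = n := by
  classical
  have hfilter : (single y n).filter (· ∉ Set.range ι) = single y n :=
    Finsupp.filter_single_of_pos _ hy
  exact (congrArg Finsupp.degree hfilter).trans (Finsupp.degree_single y n)

theorem exists_mapDomain_innerExponent_add_eq (ι : σ ↪ τ) (b : τ →₀ ℕ) :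
    ∃ Y : Multiset τ, (∀ y ∈ Y, y ∉ Set.range ι) ∧ Y.card = outerDegree ι b ∧
      mapDomain ι (innerExponent ι b) + (Y.map (single · 1)).sum = b := by
  induction b using Finsupp.induction_linear with
  | zero => exact ⟨0, by simp⟩
  | add b c ihb ihc =>
    obtain ⟨Y, hY, hYcard, hYsum⟩ := ihb
    obtain ⟨Z, hZ, hZcard, hZsum⟩ := ihc
    refine ⟨Y + Z, fun y hy => (Multiset.mem_add.1 hy).elim (hY y) (hZ y), ?_, ?_⟩
    · rw [Multiset.card_add, map_add, hYcard, hZcard]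
    · rw [map_add, Finsupp.mapDomain_add, Multiset.map_add, Multiset.sum_add, add_add_add_comm,
        hYsum, hZsum]
  | single y n =>
    by_cases hy : y ∈ Set.range ι
    · obtain ⟨i, rfl⟩ := hy
      rw [← Finsupp.mapDomain_single, innerExponent_mapDomain, outerDegree_mapDomain]
      exact ⟨0, by simp⟩
    · rw [innerExponent_single hy, outerDegree_single hy]
      refine ⟨Multiset.replicate n y, fun x hx => Multiset.eq_of_mem_replicate hx ▸ hy, by simp, ?_⟩
      simp

theorem exists_sum_eq_innerExponent_of_forall_mem_adjoinVars {E : Multiset (τ →₀ ℕ)}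
    (hE : ∀ e ∈ E, e ∈ adjoinVars ι G) :
    ∃ D : Multiset (σ →₀ ℕ), (∀ d ∈ D, d ∈ G) ∧ D.sum = innerExponent ι E.sum ∧
      D.card + outerDegree ι E.sum = E.card := by
  induction E using Multiset.induction with
  | empty => exact ⟨0, by simp⟩
  | cons e E ih =>
    rw [Multiset.forall_mem_cons] at hE
    obtain ⟨D, hDG, hDsum, hDcard⟩ := ih hE.2
    rw [Multiset.sum_cons, map_add, map_add, Multiset.card_cons, ← hDsum, ← hDcard]
    rcases hE.1 with ⟨d, hd, rfl⟩ | ⟨y, hy, rfl⟩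
    · refine ⟨d ::ₘ D, Multiset.forall_mem_cons.2 ⟨hd, hDG⟩, ?_, ?_⟩
      · rw [Multiset.sum_cons, innerExponent_mapDomain]
      · rw [Multiset.card_cons, outerDegree_mapDomain]
        omega
    · refine ⟨D, hDG, ?_, ?_⟩
      · rw [innerExponent_single hy, zero_add]
      · rw [outerDegree_single hy]
        omega

theorem packs_adjoinVars_iff {b : τ →₀ ℕ} :
    Packs (adjoinVars ι G) t 0 b ↔ Packs G (t - outerDegree ι b) 0 (innerExponent ι b) := by
  constructor
  · rintro ⟨E, hE, rfl, hEb⟩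
    rw [add_zero] at hEb
    obtain ⟨D, hDG, hDsum, hDcard⟩ := exists_sum_eq_innerExponent_of_forall_mem_adjoinVars hE
    have hD : Packs G D.card 0 (innerExponent ι b) :=
      ⟨D, hDG, rfl, by rw [add_zero, hDsum]; exact innerExponent_mono hEb⟩
    refine hD.anti ?_
    have := outerDegree_mono (ι := ι) hEb
    omega
  · rintro ⟨D, hDG, hDcard, hDb⟩
    rw [add_zero] at hDb
    obtain ⟨Y, hY, hYcard, hYb⟩ := exists_mapDomain_innerExponent_add_eq ι b
    have hDY : Packs (adjoinVars ι G) (D.card + Y.card) 0 b := by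
      refine ⟨D.map (mapDomain ι) + Y.map (single · 1), fun e he => ?_, by simp, ?_⟩
      · rcases Multiset.mem_add.1 he with he | he
        · obtain ⟨d, hd, rfl⟩ := Multiset.mem_map.1 he
          exact .inl ⟨d, hDG d hd, rfl⟩
        · obtain ⟨y, hy, rfl⟩ := Multiset.mem_map.1 he
          exact .inr ⟨y, hY y hy, rfl⟩
      · have hmap : (D.map (mapDomain ι)).sum = mapDomain ι D.sum :=
          (map_multiset_sum (Finsupp.mapDomain.addMonoidHom ι) D).symm
        rw [add_zero, Multiset.sum_add, hmap]
        refine le_of_le_of_eq ?_ hYb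
        gcongr
    exact hDY.anti (by omega)

theorem isSocleExponent_adjoinVars_iff {b : τ →₀ ℕ} :
    IsSocleExponent (adjoinVars ι G) t b ↔
      IsSocleExponent G (t - outerDegree ι b) (innerExponent ι b) ∧
        ∀ y ∉ Set.range ι, Packs G (t - outerDegree ι b - 1) 0 (innerExponent ι b) := by
  have inner (i : σ) : Packs (adjoinVars ι G) t 0 (b + single (ι i) 1) ↔
      Packs G (t - outerDegree ι b) 0 (innerExponent ι b + single i 1) := by
    rw [packs_adjoinVars_iff, ← Finsupp.mapDomain_single, map_add, map_add,
      innerExponent_mapDomain, outerDegree_mapDomain, add_zero]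
  have outer {y : τ} (hy : y ∉ Set.range ι) : Packs (adjoinVars ι G) t 0 (b + single y 1) ↔
      Packs G (t - outerDegree ι b - 1) 0 (innerExponent ι b) := by
    rw [packs_adjoinVars_iff, map_add, map_add, innerExponent_single hy, outerDegree_single hy,
      add_zero, Nat.sub_sub]
  rw [IsSocleExponent, packs_adjoinVars_iff, IsSocleExponent, and_assoc]
  refine and_congr_right' ⟨fun h => ⟨fun i => (inner i).1 (h _), fun y hy => (outer hy).1 (h y)⟩,
    fun h y => ?_⟩
  by_cases hy : y ∈ Set.range ι
  · obtain ⟨i, rfl⟩ := hy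
    exact (inner i).2 (h.1 i)
  · exact (outer hy).2 (h.2 y hy)

theorem IsSocleExponent.exists_adjoinVars (ι : σ ↪ τ) {a : σ →₀ ℕ} (h : IsSocleExponent G t a) :
    ∃ b, IsSocleExponent (adjoinVars ι G) t b := by
  by_cases hι : ∃ y₀, y₀ ∉ Set.range ι
  · obtain ⟨y₀, hy₀⟩ := hι
    obtain ⟨s, hs, hmax⟩ : ∃ s, Packs G s 0 a ∧ ¬ Packs G (s + 1) 0 a := by
      by_contra! hall
      exact h.1 (Nat.rec (Packs.of_zero zero_le) hall t)
    have hst : s < t := lt_of_not_ge fun hts => h.1 (hs.anti hts)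
    refine ⟨mapDomain ι a + single y₀ (t - 1 - s), isSocleExponent_adjoinVars_iff.2 ?_⟩
    rw [map_add, map_add, innerExponent_mapDomain, innerExponent_single hy₀, add_zero,
      outerDegree_mapDomain, outerDegree_single hy₀, zero_add,
      show t - (t - 1 - s) = s + 1 by omega]
    exact ⟨⟨hmax, fun i => (h.2 i).anti hst⟩, fun _ _ => hs⟩
  · push Not at hι
    refine ⟨mapDomain ι a, isSocleExponent_adjoinVars_iff.2 ⟨?_, fun y hy => (hy (hι y)).elim⟩⟩
    rwa [innerExponent_mapDomain, outerDegree_mapDomain]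

theorem exists_isSocleExponent_adjoinVars_iff (ι : σ ↪ τ) (hdeg : ∀ e ∈ G, e.degree = 2) :
    (∃ b, IsSocleExponent (adjoinVars ι G) t b) ↔ ∃ a, IsSocleExponent G t a := by
  constructor
  · rintro ⟨b, hb⟩
    exact (isSocleExponent_adjoinVars_iff.1 hb).1.exists_of_le hdeg (Nat.sub_le _ _)
  · rintro ⟨a, ha⟩
    exact ha.exists_adjoinVars ι

end AdjoinVars

section MonomialIdeal

section Power

variable {σ : Type*} (k : Type*) [CommSemiring k] (G : Set (σ →₀ ℕ))

/-- The ideal generated by the monomials with exponents in `G`. -/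
def monomialIdeal : Ideal (MvPolynomial σ k) :=
  Ideal.span ((monomial · 1) '' G)

theorem monomialIdeal_pow (t : ℕ) :
    monomialIdeal k G ^ t =
      monomialIdeal k {d | ∃ E : Multiset (σ →₀ ℕ), (∀ e ∈ E, e ∈ G) ∧ E.card = t ∧ E.sum = d} := by
  induction t with
  | zero =>
    rw [pow_zero, Ideal.one_eq_top, eq_comm, Ideal.eq_top_iff_one]
    exact Ideal.subset_span ⟨0, ⟨0, by simp⟩, rfl⟩
  | succ t ih =>
    rw [pow_succ', ih, monomialIdeal, monomialIdeal, monomialIdeal, Ideal.span_mul_span']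
    congr 1
    ext f
    constructor
    · rintro ⟨_, ⟨e, he, rfl⟩, _, ⟨_, ⟨E, hEG, hE, rfl⟩, rfl⟩, rfl⟩
      refine ⟨e + E.sum, ⟨e ::ₘ E, Multiset.forall_mem_cons.2 ⟨he, hEG⟩, by simp [hE], by simp⟩, ?_⟩
      simp [monomial_mul]
    · rintro ⟨_, ⟨E, hEG, hE, rfl⟩, rfl⟩
      obtain ⟨e, he⟩ := Multiset.card_pos_iff_exists_mem.1 (by omega : 0 < E.card)
      obtain ⟨E, rfl⟩ := Multiset.exists_cons_of_mem he
      rw [Multiset.card_cons, Nat.add_right_cancel_iff] at hE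
      rw [Multiset.forall_mem_cons] at hEG
      refine ⟨_, ⟨e, hEG.1, rfl⟩, _, ⟨E.sum, ⟨E, hEG.2, hE, rfl⟩, rfl⟩, ?_⟩
      simp [monomial_mul]

variable {k G}

theorem mem_monomialIdeal_pow_iff {t : ℕ} {f : MvPolynomial σ k} :
    f ∈ monomialIdeal k G ^ t ↔ ∀ a ∈ f.support, Packs G t 0 a := by
  rw [monomialIdeal_pow, monomialIdeal, mem_ideal_span_monomial_image]
  refine forall₂_congr fun a _ => ?_
  simp [Packs, and_assoc]

theorem monomial_one_mem_monomialIdeal_pow_iff [Nontrivial k] {t : ℕ} {a : σ →₀ ℕ} :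
    monomial a (1 : k) ∈ monomialIdeal k G ^ t ↔ Packs G t 0 a := by
  classical
  simp [mem_monomialIdeal_pow_iff, support_monomial]

theorem X_mem_monomialIdeal_adjoinVars {τ : Type*} {ι : σ ↪ τ} {y : τ} (hy : y ∉ Set.range ι) :
    (X y : MvPolynomial τ k) ∈ monomialIdeal k (adjoinVars ι G) :=
  Ideal.subset_span ⟨_, .inr ⟨y, hy, rfl⟩, rfl⟩

end Power

variable {σ k : Type} [Field k]

theorem maxIdeal_isMaximal : (maxIdeal k σ).IsMaximal := by
  have hker : maxIdeal k σ = RingHom.ker (constantCoeff : MvPolynomial σ k →+* k) := by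
    ext f
    rw [RingHom.mem_ker, constantCoeff_eq, show maxIdeal k σ = idealOfVars σ k from rfl]
    simpa [Finsupp.degree_eq_zero_iff] using mem_pow_idealOfVars_iff' 1 f
  rw [hker]
  exact RingHom.ker_isMaximal_of_surjective _ fun c => ⟨C c, constantCoeff_C σ c⟩

theorem maxIdeal_mem_associatedPrimes_iff [Finite σ] {I : Ideal (MvPolynomial σ k)} :
    maxIdeal k σ ∈ associatedPrimes (MvPolynomial σ k) (MvPolynomial σ k ⧸ I) ↔
      ∃ f ∉ I, ∀ i, X i * f ∈ I := by
  have mem_colon_iff (f g : MvPolynomial σ k) :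
      g ∈ Submodule.colon (⊥ : Submodule (MvPolynomial σ k) (MvPolynomial σ k ⧸ I))
        {Ideal.Quotient.mk I f} ↔ g * f ∈ I := by
    rw [Submodule.mem_colon_singleton, Submodule.mem_bot, ← Ideal.Quotient.eq_zero_iff_mem,
      map_mul]
    rfl
  have hmax : (maxIdeal k σ).IsMaximal := maxIdeal_isMaximal
  rw [AssociatedPrimes.mem_iff, isAssociatedPrime_iff]
  constructor
  · rintro ⟨-, x, hx⟩
    obtain ⟨f, rfl⟩ := Ideal.Quotient.mk_surjective x
    refine ⟨f, fun hf => hmax.ne_top ?_, fun i => ?_⟩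
    · rwa [hx, Ideal.eq_top_iff_one, mem_colon_iff, one_mul]
    · rw [← mem_colon_iff, ← hx]
      exact Ideal.subset_span ⟨i, rfl⟩
  · rintro ⟨f, hf, hXf⟩
    refine ⟨hmax.isPrime, Ideal.Quotient.mk I f, hmax.eq_of_le ?_ (Ideal.span_le.2 ?_)⟩
    · rwa [Ne, Ideal.eq_top_iff_one, mem_colon_iff, one_mul]
    · rintro _ ⟨i, rfl⟩
      exact (mem_colon_iff f (X i)).2 (hXf i)

theorem maxIdeal_mem_associatedPrimes_monomialIdeal_pow_iff [Finite σ] {G : Set (σ →₀ ℕ)} {t : ℕ} :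
    maxIdeal k σ ∈ associatedPrimes (MvPolynomial σ k) (MvPolynomial σ k ⧸ monomialIdeal k G ^ t) ↔
      ∃ a, IsSocleExponent G t a := by
  rw [maxIdeal_mem_associatedPrimes_iff]
  constructor
  · rintro ⟨f, hf, hXf⟩
    rw [mem_monomialIdeal_pow_iff] at hf
    push Not at hf
    obtain ⟨a, haf, ha⟩ := hf
    refine ⟨a, ha, fun i => mem_monomialIdeal_pow_iff.1 (hXf i) _ ?_⟩
    rwa [mem_support_iff, add_comm a, coeff_X_mul, ← mem_support_iff]
  · rintro ⟨a, ha, hsocle⟩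
    refine ⟨monomial a 1, monomial_one_mem_monomialIdeal_pow_iff.not.2 ha, fun i => ?_⟩
    rw [X, monomial_mul, mul_one, add_comm]
    exact monomial_one_mem_monomialIdeal_pow_iff.2 (hsocle i)

end MonomialIdeal

section Localization

variable {σ : Type} (k : Type) [Field k] (v : σ)

open Classical in
/-- The substitution `x_v = 1`, a retraction of `R` onto `R_v` that factors through `R[x_v⁻¹]`. -/
def setOne : MvPolynomial σ k →ₐ[k] Rv k v :=
  aeval fun i => if h : i = v then 1 else X ⟨i, h⟩

theorem setOne_X_self : setOne k v (X v) = 1 := by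
  simp [setOne]

theorem setOne_X_of_ne {i : σ} (hi : i ≠ v) : setOne k v (X i) = X ⟨i, hi⟩ := by
  simp [setOne, hi]

variable {k v}

theorem setOne_rename (f : Rv k v) : setOne k v (rename Subtype.val f) = f := by
  have hid : (setOne k v).comp (rename Subtype.val) = AlgHom.id k (Rv k v) :=
    algHom_ext fun i => by simp [setOne_X_of_ne k v i.2]
  exact DFunLike.congr_fun hid f

theorem idealV_le_map_setOne (I : Ideal (MvPolynomial σ k)) :
    idealV k I v ≤ I.map (setOne k v) := by
  have hunit : IsUnit ((setOne k v : MvPolynomial σ k →+* Rv k v) (X v)) := by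
    simp [setOne_X_self]
  let ψ : LocAway k v →+* Rv k v := IsLocalization.Away.lift (X v) hunit
  have hψ : ψ.comp (algebraMap (MvPolynomial σ k) (LocAway k v)) = setOne k v :=
    IsLocalization.Away.lift_comp _ hunit
  intro f hf
  have hmem := Ideal.mem_map_of_mem ψ (Ideal.mem_comap.1 hf)
  rw [Ideal.map_map, hψ] at hmem
  have hf' : ψ (algebraMap (MvPolynomial σ k) _ (rename Subtype.val f)) = f :=
    (DFunLike.congr_fun hψ _).trans (setOne_rename f)
  exact hf' ▸ hmem

theorem rename_setOne_monomial_mul_X_pow (d : σ →₀ ℕ) :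
    rename Subtype.val (setOne k v (monomial d 1)) * X v ^ d v = monomial d 1 := by
  induction d using Finsupp.induction_linear with
  | zero => simp
  | add d e hd he =>
    have hmul : (monomial (d + e) 1 : MvPolynomial σ k) = monomial d 1 * monomial e 1 := by
      rw [monomial_mul, mul_one]
    rw [hmul, map_mul, map_mul, Finsupp.add_apply, pow_add, mul_mul_mul_comm, hd, he]
  | single i n =>
    rw [← X_pow_eq_monomial, map_pow, map_pow]
    by_cases hi : i = v
    · subst hi
      simp [setOne_X_self]
    · simp [setOne_X_of_ne k v hi, Finsupp.single_eq_of_ne' hi]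

theorem idealV_monomialIdeal (G : Set (σ →₀ ℕ)) :
    idealV k (monomialIdeal k G) v = (monomialIdeal k G).map (setOne k v) := by
  refine le_antisymm (idealV_le_map_setOne _) ?_
  rw [monomialIdeal, Ideal.map_span, Ideal.span_le]
  rintro _ ⟨_, ⟨d, hd, rfl⟩, rfl⟩
  have hunit : IsUnit (algebraMap (MvPolynomial σ k) (LocAway k v) (X v ^ d v)) := by
    rw [map_pow]
    exact (IsLocalization.Away.algebraMap_isUnit (X v)).pow _
  rw [SetLike.mem_coe, idealV, Ideal.mem_comap, ← Ideal.mul_unit_mem_iff_mem _ hunit,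
    RingHom.comp_apply, ← map_mul]
  change algebraMap _ _ (rename _ _ * _) ∈ _
  rw [rename_setOne_monomial_mul_X_pow]
  exact Ideal.mem_map_of_mem _ (Ideal.subset_span ⟨d, hd, rfl⟩)

end Localization

section EdgeIdeal

open Finsupp (single)

variable {σ : Type} (k : Type) [Field k] (Γ : SimpleGraph σ) (v : σ)

/-- The exponents of the monomials `x_i x_j` with `{i, j}` an edge of `Γ`. -/
def edgeExponents : Set (σ →₀ ℕ) :=
  {e | ∃ i j, Γ.Adj i j ∧ e = single i 1 + single j 1}

theorem degree_eq_two_of_mem_edgeExponents : ∀ e ∈ edgeExponents Γ, e.degree = 2 := by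
  rintro _ ⟨i, j, -, rfl⟩
  simp

theorem edgeIdeal_eq_monomialIdeal : edgeIdeal k Γ = monomialIdeal k (edgeExponents Γ) := by
  rw [edgeIdeal, monomialIdeal]
  congr 1
  ext f
  constructor
  · rintro ⟨i, j, hij, rfl⟩
    exact ⟨_, ⟨i, j, hij, rfl⟩, by simp [X, monomial_mul]⟩
  · rintro ⟨_, ⟨i, j, hij, rfl⟩, rfl⟩
    exact ⟨i, j, hij, by simp [X, monomial_mul]⟩

theorem edgeIdealOn_eq_edgeIdeal_induce (U : Set σ) :
    edgeIdealOn k Γ U = edgeIdeal k (Γ.induce U) := rfl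

/-- The inclusion of `V ∖ N[v]` into `V ∖ {v}`. -/
def complClosedNbhdEmbedding : ((closedNbhd Γ v)ᶜ : Set σ) ↪ {i : σ // i ≠ v} :=
  Subtype.impEmbedding _ _ fun _ hi hiv => hi (.inl hiv)

variable {Γ v}

theorem notMem_range_complClosedNbhdEmbedding_iff {y : {i : σ // i ≠ v}} :
    y ∉ Set.range (complClosedNbhdEmbedding Γ v) ↔ Γ.Adj v y := by
  constructor
  · intro hy
    by_contra hadj
    exact hy ⟨⟨y, fun h => h.elim y.2 hadj⟩, rfl⟩
  · rintro hadj ⟨i, rfl⟩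
    exact i.2 (.inr hadj)

theorem setOne_X_mul_X_eq_monomial (i j : ((closedNbhd Γ v)ᶜ : Set σ)) :
    setOne k v (X (i : σ) * X (j : σ)) =
      monomial (Finsupp.mapDomain (complClosedNbhdEmbedding Γ v) (single i 1 + single j 1)) 1 := by
  have ne (i : ((closedNbhd Γ v)ᶜ : Set σ)) : (i : σ) ≠ v := (complClosedNbhdEmbedding Γ v i).2
  rw [map_mul, setOne_X_of_ne k v (ne i), setOne_X_of_ne k v (ne j), Finsupp.mapDomain_add,
    Finsupp.mapDomain_single, Finsupp.mapDomain_single, X, X, monomial_mul, one_mul]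
  rfl

theorem setOne_X_mul_X_mem_monomialIdeal_adjoinVars {i j : σ} (hij : Γ.Adj i j) :
    setOne k v (X i * X j) ∈ monomialIdeal k
      (adjoinVars (complClosedNbhdEmbedding Γ v) (edgeExponents (Γ.induce (closedNbhd Γ v)ᶜ))) := by
  have X_mem {y : {i : σ // i ≠ v}} (hy : Γ.Adj v y) := X_mem_monomialIdeal_adjoinVars (k := k)
    (G := edgeExponents (Γ.induce (closedNbhd Γ v)ᶜ))
    (notMem_range_complClosedNbhdEmbedding_iff.2 hy)
  by_cases hi : i = v
  · subst hi
    rw [map_mul, setOne_X_self, one_mul, setOne_X_of_ne _ _ hij.ne']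
    exact X_mem hij
  by_cases hj : j = v
  · subst hj
    rw [map_mul, setOne_X_self, mul_one, setOne_X_of_ne _ _ hi]
    exact X_mem hij.symm
  by_cases hvi : Γ.Adj v i
  · rw [map_mul, setOne_X_of_ne _ _ hi]
    exact Ideal.mul_mem_right _ _ (X_mem hvi)
  by_cases hvj : Γ.Adj v j
  · rw [map_mul, setOne_X_of_ne _ _ hj]
    exact Ideal.mul_mem_left _ _ (X_mem hvj)
  lift i to ((closedNbhd Γ v)ᶜ : Set σ) using fun h => h.elim hi hvi
  lift j to ((closedNbhd Γ v)ᶜ : Set σ) using fun h => h.elim hj hvj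
  rw [setOne_X_mul_X_eq_monomial]
  exact Ideal.subset_span ⟨_, .inl ⟨_, ⟨i, j, hij, rfl⟩, rfl⟩, rfl⟩

theorem map_setOne_edgeIdeal :
    (edgeIdeal k Γ).map (setOne k v) = monomialIdeal k
      (adjoinVars (complClosedNbhdEmbedding Γ v) (edgeExponents (Γ.induce (closedNbhd Γ v)ᶜ))) := by
  apply le_antisymm
  · rw [edgeIdeal, Ideal.map_span, Ideal.span_le]
    rintro _ ⟨_, ⟨i, j, hij, rfl⟩, rfl⟩
    exact setOne_X_mul_X_mem_monomialIdeal_adjoinVars k hij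
  · have mem {i j : σ} (hij : Γ.Adj i j) :
        setOne k v (X i * X j) ∈ (edgeIdeal k Γ).map (setOne k v) :=
      Ideal.mem_map_of_mem _ (Ideal.subset_span ⟨i, j, hij, rfl⟩)
    rw [monomialIdeal, Ideal.span_le]
    rintro _ ⟨_, ⟨_, ⟨i, j, hij, rfl⟩, rfl⟩ | ⟨y, hy, rfl⟩, rfl⟩
    · have := mem (i := i) (j := j) hij
      rwa [setOne_X_mul_X_eq_monomial] at this
    · have := mem (notMem_range_complClosedNbhdEmbedding_iff.1 hy)
      rwa [map_mul, setOne_X_self, one_mul, setOne_X_of_ne _ _ y.2] at this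

end EdgeIdeal

theorem stmt1_general (k : Type) [Field k] {σ : Type} [Finite σ] (Γ : SimpleGraph σ) (v : σ)
    (t : ℕ) :
    maxIdeal k { i : σ // i ≠ v } ∈
        associatedPrimes (Rv k v) (Rv k v ⧸ (idealV k (edgeIdeal k Γ) v) ^ t) ↔
      maxIdeal k ((closedNbhd Γ v)ᶜ : Set σ) ∈
        associatedPrimes (MvPolynomial ((closedNbhd Γ v)ᶜ : Set σ) k)
          (MvPolynomial ((closedNbhd Γ v)ᶜ : Set σ) k ⧸
            (edgeIdealOn k Γ ((closedNbhd Γ v)ᶜ)) ^ t) := by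
  rw [edgeIdealOn_eq_edgeIdeal_induce, edgeIdeal_eq_monomialIdeal, idealV_monomialIdeal,
    ← edgeIdeal_eq_monomialIdeal, map_setOne_edgeIdeal, edgeIdeal_eq_monomialIdeal,
    maxIdeal_mem_associatedPrimes_monomialIdeal_pow_iff,
    maxIdeal_mem_associatedPrimes_monomialIdeal_pow_iff]
  exact exists_isSocleExponent_adjoinVars_iff _ (degree_eq_two_of_mem_edgeExponents _)

/-- For a vertex `v` and `t ≥ 1`: the maximal graded ideal of
`R_v = k[x_i : i ≠ v]` is an associated prime of `R_v / I_v^t` if and only if the maximal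
graded ideal of `S = k[x_i : i ∉ N[v]]` is an associated prime of `S / J^t`, where `J` is
the edge ideal of the induced subgraph `Γ_{V ∖ N[v]}`. -/
theorem stmt1 (k : Type) [Field k] (n : ℕ) (Γ : SimpleGraph (Fin n))
    (hiso : NoIsolated Γ) (v : Fin n) (t : ℕ) (ht : 1 ≤ t) :
    (maxIdeal k { i : Fin n // i ≠ v } ∈
        associatedPrimes (Rv k v) (Rv k v ⧸ (idealV k (edgeIdeal k Γ) v) ^ t)) ↔
      (maxIdeal k ((closedNbhd Γ v)ᶜ : Set (Fin n)) ∈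
        associatedPrimes (MvPolynomial ((closedNbhd Γ v)ᶜ : Set (Fin n)) k)
          (MvPolynomial ((closedNbhd Γ v)ᶜ : Set (Fin n)) k ⧸
            (edgeIdealOn k Γ ((closedNbhd Γ v)ᶜ)) ^ t)) := by
  exact stmt1_general k Γ v t

end
end

section
/- Let Γ be a connected bipartite graph with bipartition (F, G) of its vertex set V = {1,…,n}. For every integer t ≥ n there exists a ∈ ℕ^n with a_i > 0 for all i ∈ V such that F and G are the only facets of the degree complex Δ_a(I^t) and Σ_{i ∈ F} a_i = Σ_{i ∈ G} a_i = t − 1. -/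
open MvPolynomial

noncomputable section

/-! Take a spanning tree `T` of `Γ` and thicken one edge `fg` of it by `t - n` parallel copies; let
`a` be the degree vector, so that `x^a` is a product of `t - 1` edge monomials and each side of the
bipartition carries total weight `t - 1`. Inverting the variables of one side makes every
generator of `I` divisible by a variable of the other side, and `x^a` has degree only `t - 1` there:
both sides are faces. Conversely let a face contain `u ∈ F` and `v ∈ G`. The path in `T` from `u` to
`v` has an even number of vertices, and its edge monomials together with `x_u x_v` multiply to the
square of the product of these vertices, which is the square of a product of alternate edges.
Hence `x_u x_v x^a` gains one edge monomial over `x^a` and lies in `I^t`, a contradiction. -/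

section Graph

variable {V M : Type*} {Γ : SimpleGraph V}

theorem prod_edgeFinset_map_mul [Fintype V] [CommMonoid M] (Γ : SimpleGraph V)
    [DecidableRel Γ.Adj] (f : V → M) :
    ∏ e ∈ Γ.edgeFinset, (e.map f).mul = ∏ v, f v ^ Γ.degree v := by
  classical
  have edge_prod : ∀ e ∈ Γ.edgeFinset, (e.map f).mul = ∏ v with v ∈ e, f v := by
    intro e he
    induction e with
    | _ v w =>
      have hvw : Γ.Adj v w := by simpa using he
      have endpoints : ({x | x ∈ s(v, w)} : Finset V) = {v, w} := by ext; simp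
      rw [endpoints, Finset.prod_pair hvw.ne, Sym2.map_mk, Sym2.mul_mk]
  calc ∏ e ∈ Γ.edgeFinset, (e.map f).mul
      = ∏ e ∈ Γ.edgeFinset, ∏ v, if v ∈ e then f v else 1 :=
        Finset.prod_congr rfl fun e he => by rw [edge_prod e he, Finset.prod_filter]
    _ = ∏ v, ∏ e ∈ Γ.edgeFinset, if v ∈ e then f v else 1 := Finset.prod_comm
    _ = ∏ v, f v ^ Γ.degree v := Finset.prod_congr rfl fun v _ => by
        rw [← Finset.prod_filter, Finset.prod_const, ← SimpleGraph.incidenceFinset_eq_filter,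
          SimpleGraph.card_incidenceFinset_eq_degree]

theorem mul_prod_walk_edges [CommMonoid M] (f : V → M) {u v : V} (p : Γ.Walk u v) :
    f u * f v * (p.edges.map fun e => (e.map f).mul).prod = (p.support.map f).prod ^ 2 := by
  induction p with
  | nil => simp [sq]
  | @cons u w v h p ih =>
    simp only [SimpleGraph.Walk.edges_cons, SimpleGraph.Walk.support_cons, List.map_cons,
      List.prod_cons, Sym2.map_mk, Sym2.mul_mk, mul_pow]
    rw [← ih, sq]
    ac_rfl

theorem odd_length_of_isBipartiteWith {s t : Set V} (hΓ : Γ.IsBipartiteWith s t) {u v : V}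
    (hu : u ∈ s) (hv : v ∈ t) (p : Γ.Walk u v) : Odd p.length := by
  classical
  have notMem_of_mem : ∀ w ∈ t, w ∉ s := fun _ hwt hws => hΓ.disjoint.notMem_of_mem_left hws hwt
  let c : Γ.Coloring Bool := SimpleGraph.Coloring.mk (fun w => decide (w ∈ s)) fun hvw => by
    rcases hΓ.mem_of_adj hvw with ⟨hv, hw⟩ | ⟨hv, hw⟩ <;> simp [hv, hw, notMem_of_mem]
  have hcu : c u = true := decide_eq_true hu
  have hcv : c v = false := decide_eq_false (notMem_of_mem v hv)
  rw [c.odd_length_iff_not_congr p, hcu, hcv]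
  decide

theorem isBipartiteWith_mono {Γ' : SimpleGraph V} {s t : Set V} (hle : Γ ≤ Γ')
    (hΓ' : Γ'.IsBipartiteWith s t) : Γ.IsBipartiteWith s t :=
  ⟨hΓ'.disjoint, fun _ _ h => hΓ'.mem_of_adj (hle h)⟩

theorem exists_adj_across_of_isBipartiteWith [Nontrivial V] (hconn : Γ.Preconnected) {s t : Set V}
    (hΓ : Γ.IsBipartiteWith s t) : ∃ f ∈ s, ∃ g ∈ t, Γ.Adj f g := by
  obtain ⟨v⟩ : Nonempty V := inferInstance
  obtain ⟨w, hvw⟩ := hconn.exists_adj_of_nontrivial v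
  rcases hΓ.mem_of_adj hvw with ⟨hv, hw⟩ | ⟨hv, hw⟩
  · exact ⟨v, hv, w, hw, hvw⟩
  · exact ⟨w, hw, v, hv, hvw.symm⟩

theorem isBipartiteWith_of_isIndep {σ : Type} [Fintype σ] [DecidableEq σ] {Γ : SimpleGraph σ}
    {F G : Finset σ} (hFG : IsCompl F G) (hF : IsIndep Γ F) (hG : IsIndep Γ G) :
    Γ.IsBipartiteWith (F : Set σ) G := by
  refine ⟨Finset.disjoint_coe.2 hFG.disjoint, fun v w hvw => ?_⟩
  have hF' := hF v
  have hG' := hG v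
  rw [← hFG.compl_eq] at hG' ⊢
  simp only [Finset.mem_coe, Finset.mem_compl] at hG' ⊢
  grind

end Graph

section ThickenedDegree

variable {V : Type*} [Fintype V] [DecidableEq V] {T : SimpleGraph V} [DecidableRel T.Adj]

/-- The degree vector of the multigraph obtained from `T` by adding `m` parallel copies of an edge
`fg`; it is the exponent vector `a` of the theorem when `T` is a spanning tree. -/
def thickenedDegree (T : SimpleGraph V) [DecidableRel T.Adj] (f g : V) (m : ℕ) : V → ℕ :=
  (fun v => T.degree v) + Pi.single f m + Pi.single g m

theorem thickenedDegree_comm (f g : V) (m : ℕ) :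
    thickenedDegree T f g m = thickenedDegree T g f m :=
  add_right_comm _ _ _

theorem thickenedDegree_pos [Nontrivial V] (hT : T.Preconnected) (f g : V) (m : ℕ) (v : V) :
    0 < thickenedDegree T f g m v :=
  Nat.add_pos_left (Nat.add_pos_left (hT.degree_pos_of_nontrivial v) _) _

theorem sum_thickenedDegree_left {F G : Finset V} (hT : T.IsBipartiteWith (F : Set V) G) {f g : V}
    (hf : f ∈ F) (hg : g ∈ G) (m : ℕ) :
    ∑ v ∈ F, thickenedDegree T f g m v = T.edgeFinset.card + m := by
  have hgF : g ∉ F := hT.disjoint.notMem_of_mem_right hg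
  simp [thickenedDegree, Finset.sum_add_distrib, Pi.single_apply, hf, hgF,
    SimpleGraph.isBipartiteWith_sum_degrees_eq_card_edges hT]

theorem sum_thickenedDegree_right {F G : Finset V} (hT : T.IsBipartiteWith (F : Set V) G) {f g : V}
    (hf : f ∈ F) (hg : g ∈ G) (m : ℕ) :
    ∑ v ∈ G, thickenedDegree T f g m v = T.edgeFinset.card + m := by
  rw [thickenedDegree_comm, sum_thickenedDegree_left hT.symm hg hf]

end ThickenedDegree

section EdgeIdeal

variable {k : Type} [Field k] {σ : Type} {Γ : SimpleGraph σ}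

theorem X_mul_X_mem_edgeIdeal {i j : σ} (h : Γ.Adj i j) :
    (X i * X j : MvPolynomial σ k) ∈ edgeIdeal k Γ :=
  Ideal.subset_span ⟨i, j, h, rfl⟩

theorem map_X_mul_mem_edgeIdeal {e : Sym2 σ} (he : e ∈ Γ.edgeSet) :
    (e.map (X : σ → MvPolynomial σ k)).mul ∈ edgeIdeal k Γ := by
  induction e with
  | _ i j => exact X_mul_X_mem_edgeIdeal he

theorem edgeIdeal_mono {T : SimpleGraph σ} (h : T ≤ Γ) : edgeIdeal k T ≤ edgeIdeal k Γ :=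
  Ideal.span_mono fun _ ⟨i, j, hij, hm⟩ => ⟨i, j, h hij, hm⟩

-- The vertices of an odd walk pair off into its first, third, fifth, … edges.
theorem prod_walk_support_mem_edgeIdeal_pow {m : ℕ} {u v : σ} (p : Γ.Walk u v)
    (hp : p.length = 2 * m + 1) :
    (p.support.map (X : σ → MvPolynomial σ k)).prod ∈ edgeIdeal k Γ ^ (m + 1) := by
  induction m generalizing u with
  | zero =>
    match p, hp with
    | .cons h .nil, _ => simpa using X_mul_X_mem_edgeIdeal h
  | succ m ih =>
    match p, hp with
    | .cons h (.cons _ q), hp =>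
      simp only [SimpleGraph.Walk.length_cons] at hp
      simp only [SimpleGraph.Walk.support_cons, List.map_cons, List.prod_cons]
      rw [← mul_assoc, pow_succ']
      exact Ideal.mul_mem_mul (X_mul_X_mem_edgeIdeal h) (ih q (by omega))

theorem X_mul_X_mul_prod_walk_edges_mem_edgeIdeal_pow {u v : σ} (p : Γ.Walk u v)
    (hp : Odd p.length) :
    X u * X v * (p.edges.map fun e => (e.map (X : σ → MvPolynomial σ k)).mul).prod ∈
      edgeIdeal k Γ ^ (p.length + 1) := by
  obtain ⟨m, hm⟩ := hp
  have length_succ : p.length + 1 = (m + 1) * 2 := by omega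
  rw [mul_prod_walk_edges, length_succ, pow_mul]
  exact Ideal.pow_mem_pow (prod_walk_support_mem_edgeIdeal_pow p hm) 2

theorem prod_map_X_mul_mem_edgeIdeal_pow {s : Finset (Sym2 σ)} (hs : ∀ e ∈ s, e ∈ Γ.edgeSet) :
    ∏ e ∈ s, (e.map (X : σ → MvPolynomial σ k)).mul ∈ edgeIdeal k Γ ^ s.card := by
  simpa using Ideal.prod_mem_prod fun e he => map_X_mul_mem_edgeIdeal (k := k) (hs e he)

theorem X_mul_X_mul_prod_edgeFinset_mem_edgeIdeal_pow [Fintype Γ.edgeSet] {u v : σ}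
    {p : Γ.Walk u v} (hp : p.IsTrail) (hodd : Odd p.length) :
    X u * X v * ∏ e ∈ Γ.edgeFinset, (e.map (X : σ → MvPolynomial σ k)).mul ∈
      edgeIdeal k Γ ^ (Γ.edgeFinset.card + 1) := by
  classical
  have trail_subset : p.edges.toFinset ⊆ Γ.edgeFinset := fun e he =>
    SimpleGraph.mem_edgeFinset.2 (p.edges_subset_edgeSet (List.mem_toFinset.1 he))
  have trail_card : p.edges.toFinset.card = p.length := by
    rw [List.toFinset_card_of_nodup hp.edges_nodup, SimpleGraph.Walk.length_edges]
  have trail_mem := X_mul_X_mul_prod_walk_edges_mem_edgeIdeal_pow (k := k) p hodd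
  have rest_mem := prod_map_X_mul_mem_edgeIdeal_pow (k := k) (Γ := Γ)
    (s := Γ.edgeFinset \ p.edges.toFinset) fun e he =>
      SimpleGraph.mem_edgeFinset.1 (Finset.mem_sdiff.1 he).1
  have card_eq :
      (Γ.edgeFinset \ p.edges.toFinset).card + (p.length + 1) = Γ.edgeFinset.card + 1 := by
    rw [← trail_card, ← add_assoc, Finset.card_sdiff_add_card_eq_card trail_subset]
  rw [← Finset.prod_sdiff trail_subset, List.prod_toFinset _ hp.edges_nodup, mul_left_comm,
    ← card_eq, pow_add]
  exact Ideal.mul_mem_mul rest_mem trail_mem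

end EdgeIdeal

section XPow

variable {k : Type} [Field k] {σ : Type} [Fintype σ]

theorem xPow_add (a b : σ → ℕ) : xPow k (a + b) = xPow k a * xPow k b := by
  simp only [xPow, Pi.add_apply, pow_add, Finset.prod_mul_distrib]

variable [DecidableEq σ]

theorem xPow_single (i : σ) (m : ℕ) : xPow k (Pi.single i m) = X i ^ m := by
  simp [xPow, Pi.single_apply]

theorem xPow_thickenedDegree (T : SimpleGraph σ) [DecidableRel T.Adj] (f g : σ) (m : ℕ) :
    xPow k (thickenedDegree T f g m) =
      (∏ e ∈ T.edgeFinset, (e.map X).mul) * (X f * X g) ^ m := by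
  rw [thickenedDegree, xPow_add, xPow_add, xPow_single, xPow_single, mul_assoc, ← mul_pow,
    prod_edgeFinset_map_mul, xPow]

theorem X_mul_X_mul_xPow_thickenedDegree_mem {T : SimpleGraph σ} [DecidableRel T.Adj]
    (hconn : T.Preconnected) {F G : Set σ} (hT : T.IsBipartiteWith F G) {u v f g : σ}
    (hu : u ∈ F) (hv : v ∈ G) (hfg : T.Adj f g) (m : ℕ) :
    X u * X v * xPow k (thickenedDegree T f g m) ∈
      edgeIdeal k T ^ (T.edgeFinset.card + m + 1) := by
  obtain ⟨p, hp⟩ := (hconn u v).exists_isPath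
  rw [xPow_thickenedDegree, ← mul_assoc, add_right_comm, pow_add]
  exact Ideal.mul_mem_mul
    (X_mul_X_mul_prod_edgeFinset_mem_edgeIdeal_pow hp.isTrail
      (odd_length_of_isBipartiteWith hT hu hv p))
    (Ideal.pow_mem_pow (X_mul_X_mem_edgeIdeal hfg) m)

end XPow

section Specialization

variable (k : Type) [Field k] {σ : Type} [DecidableEq σ] (F : Finset σ)

/-- The specialization `k[x_i : i ∈ σ] → k[X]` with `x_i ↦ 1` for `i ∈ F` and `x_i ↦ X` otherwise.
It factors through `R[x_i⁻¹ : i ∈ F]` and records the degree in the variables outside `F`. -/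
def specializeOne : MvPolynomial σ k →ₐ[k] Polynomial k :=
  aeval fun i => if i ∈ F then 1 else Polynomial.X

variable {k F}

theorem specializeOne_X_of_mem {i : σ} (hi : i ∈ F) : specializeOne k F (X i) = 1 := by
  simp [specializeOne, hi]

theorem specializeOne_X_of_notMem {i : σ} (hi : i ∉ F) :
    specializeOne k F (X i) = Polynomial.X := by
  simp [specializeOne, hi]

theorem specializeOne_eq_one_of_mem_closure {m : MvPolynomial σ k}
    (hm : m ∈ Submonoid.closure ((fun i => (X i : MvPolynomial σ k)) '' (F : Set σ))) :
    specializeOne k F m = 1 := by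
  suffices h : Submonoid.closure ((fun i => (X i : MvPolynomial σ k)) '' (F : Set σ)) ≤
      MonoidHom.mker (specializeOne k F) from h hm
  rw [Submonoid.closure_le]
  rintro _ ⟨i, hi, rfl⟩
  exact specializeOne_X_of_mem hi

theorem specializeOne_xPow [Fintype σ] (a : σ → ℕ) :
    specializeOne k F (xPow k a) = Polynomial.X ^ ∑ i ∈ Fᶜ, a i := by
  have prod_mem : ∏ i ∈ F, specializeOne k F (X i) ^ a i = 1 :=
    Finset.prod_eq_one fun i hi => by rw [specializeOne_X_of_mem hi, one_pow]
  simp only [xPow, map_prod, map_pow]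
  rw [← Finset.prod_mul_prod_compl F, prod_mem, one_mul, ← Finset.prod_pow_eq_pow_sum]
  exact Finset.prod_congr rfl fun i hi => by
    rw [specializeOne_X_of_notMem (Finset.mem_compl.1 hi)]

theorem map_specializeOne_edgeIdeal_le [Fintype σ] {Γ : SimpleGraph σ} (hF : IsIndep Γ F) :
    (edgeIdeal k Γ).map (specializeOne k F) ≤ Ideal.span {Polynomial.X} := by
  rw [edgeIdeal, Ideal.map_span, Ideal.span_le]
  rintro _ ⟨_, ⟨i, j, hij, rfl⟩, rfl⟩
  rw [SetLike.mem_coe, Ideal.mem_span_singleton, map_mul]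
  by_cases hi : i ∈ F
  · have hj : j ∉ F := fun hj => hF i hi j hj hij
    rw [specializeOne_X_of_notMem hj]
    exact dvd_mul_left _ _
  · rw [specializeOne_X_of_notMem hi]
    exact dvd_mul_right _ _

end Specialization

section DegreeComplex

theorem isFacet_iff_of_forall_subset_or_subset {σ : Type} {Δ : Set (Finset σ)} {F G : Finset σ}
    (hF : F ∈ Δ) (hG : G ∈ Δ) (hFG : ¬F ⊆ G) (hGF : ¬G ⊆ F)
    (hΔ : ∀ H ∈ Δ, H ⊆ F ∨ H ⊆ G) (H : Finset σ) : IsFacet Δ H ↔ H = F ∨ H = G := by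
  constructor
  · rintro ⟨hH, hmax⟩
    exact (hΔ H hH).imp (fun h => (hmax F hF h).symm) (fun h => (hmax G hG h).symm)
  · rintro (rfl | rfl)
    · refine ⟨hF, fun K hK hle => ?_⟩
      exact (hΔ K hK).elim (fun h => h.antisymm hle) (fun h => (hFG (hle.trans h)).elim)
    · refine ⟨hG, fun K hK hle => ?_⟩
      exact (hΔ K hK).elim (fun h => (hGF (hle.trans h)).elim) (fun h => h.antisymm hle)

variable {k : Type} [Field k] {σ : Type} [Fintype σ]

theorem mem_degComplex_iff {J : Ideal (MvPolynomial σ k)} {a : σ → ℕ} {F : Finset σ} :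
    F ∈ degComplex k J a ↔
      ∀ m ∈ Submonoid.closure ((fun i => (X i : MvPolynomial σ k)) '' (F : Set σ)),
        m * xPow k a ∉ J := by
  rw [degComplex, Set.mem_ofPred_eq, IsLocalization.algebraMap_mem_map_algebraMap_iff
    (Submonoid.closure ((fun i => (X i : MvPolynomial σ k)) '' (F : Set σ)))]
  push Not
  rfl

theorem X_mul_X_mul_xPow_notMem_of_mem_degComplex {J : Ideal (MvPolynomial σ k)} {a : σ → ℕ}
    {H : Finset σ} (hH : H ∈ degComplex k J a) {u v : σ} (hu : u ∈ H) (hv : v ∈ H) :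
    X u * X v * xPow k a ∉ J :=
  mem_degComplex_iff.1 hH _ <| mul_mem (Submonoid.subset_closure ⟨u, hu, rfl⟩)
    (Submonoid.subset_closure ⟨v, hv, rfl⟩)

variable [DecidableEq σ]

theorem mem_degComplex_edgeIdeal_pow {Γ : SimpleGraph σ} {F : Finset σ} (hF : IsIndep Γ F)
    {t : ℕ} {a : σ → ℕ} (ha : ∑ i ∈ Fᶜ, a i < t) : F ∈ degComplex k (edgeIdeal k Γ ^ t) a := by
  refine mem_degComplex_iff.2 fun m hm hmem => ha.not_ge ?_
  have image_mem := Ideal.mem_map_of_mem (specializeOne k F) hmem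
  rw [map_mul, specializeOne_eq_one_of_mem_closure hm, one_mul, specializeOne_xPow,
    Ideal.map_pow] at image_mem
  have X_pow_mem := Ideal.pow_right_mono (map_specializeOne_edgeIdeal_le hF) t image_mem
  rw [Ideal.span_singleton_pow, Ideal.mem_span_singleton] at X_pow_mem
  exact (pow_dvd_pow_iff Polynomial.X_ne_zero Polynomial.not_isUnit_X).1 X_pow_mem

theorem isFacet_degComplex_thickenedDegree_iff {Γ T : SimpleGraph σ} [DecidableRel T.Adj]
    (hTΓ : T ≤ Γ) (hT : T.Preconnected) {F G : Finset σ} (hFG : IsCompl F G)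
    (hF : IsIndep Γ F) (hG : IsIndep Γ G) {f g : σ} (hf : f ∈ F) (hg : g ∈ G) (hfg : T.Adj f g)
    (m : ℕ) (H : Finset σ) :
    IsFacet (degComplex k (edgeIdeal k Γ ^ (T.edgeFinset.card + m + 1))
      (thickenedDegree T f g m)) H ↔ H = F ∨ H = G := by
  have hbip : T.IsBipartiteWith (F : Set σ) G :=
    isBipartiteWith_mono hTΓ (isBipartiteWith_of_isIndep hFG hF hG)
  refine isFacet_iff_of_forall_subset_or_subset ?_ ?_ ?_ ?_ (fun K hK => ?_) H
  · apply mem_degComplex_edgeIdeal_pow hF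
    rw [hFG.compl_eq, sum_thickenedDegree_right hbip hf hg]
    exact Nat.lt_succ_self _
  · apply mem_degComplex_edgeIdeal_pow hG
    rw [hFG.symm.compl_eq, sum_thickenedDegree_left hbip hf hg]
    exact Nat.lt_succ_self _
  · exact fun h => Finset.disjoint_left.1 hFG.disjoint hf (h hf)
  · exact fun h => Finset.disjoint_left.1 hFG.disjoint (h hg) hg
  · by_contra! hmixed
    obtain ⟨v, hvK, hvF⟩ := Finset.not_subset.1 hmixed.1
    obtain ⟨u, huK, huG⟩ := Finset.not_subset.1 hmixed.2
    have hu : u ∈ F := by rwa [← hFG.symm.compl_eq, Finset.mem_compl]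
    have hv : v ∈ G := by rwa [← hFG.compl_eq, Finset.mem_compl]
    exact X_mul_X_mul_xPow_notMem_of_mem_degComplex hK huK hvK <|
      Ideal.pow_right_mono (edgeIdeal_mono hTΓ) _ <|
        X_mul_X_mul_xPow_thickenedDegree_mem hT hbip hu hv hfg m

end DegreeComplex

theorem stmt4_general (k : Type) [Field k] {σ : Type} [Fintype σ] [DecidableEq σ]
    {Γ : SimpleGraph σ} (hiso : NoIsolated Γ) (hconn : Γ.Connected) {F G : Finset σ}
    (hFG : IsCompl F G) (hF : IsIndep Γ F) (hG : IsIndep Γ G) {t : ℕ} (ht : Fintype.card σ ≤ t) :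
    ∃ a : σ → ℕ, (∀ i, 0 < a i) ∧
      (∀ H, IsFacet (degComplex k (edgeIdeal k Γ ^ t) a) H ↔ H = F ∨ H = G) ∧
      ∑ i ∈ F, a i = t - 1 ∧ ∑ i ∈ G, a i = t - 1 := by
  classical
  obtain ⟨v⟩ := hconn.nonempty
  obtain ⟨w, hvw⟩ := hiso v
  have : Nontrivial σ := ⟨v, w, hvw.ne⟩
  obtain ⟨T, hTΓ, hT⟩ := hconn.exists_isTree_le
  have hpre : T.Preconnected := hT.connected.preconnected
  have hbip : T.IsBipartiteWith (F : Set σ) G :=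
    isBipartiteWith_mono hTΓ (isBipartiteWith_of_isIndep hFG hF hG)
  obtain ⟨f, hf, g, hg, hfg⟩ := exists_adj_across_of_isBipartiteWith hpre hbip
  obtain ⟨m, rfl⟩ : ∃ m, t = T.edgeFinset.card + m + 1 :=
    ⟨t - Fintype.card σ, by have := hT.card_edgeFinset; omega⟩
  exact ⟨thickenedDegree T f g m, thickenedDegree_pos hpre f g m,
    isFacet_degComplex_thickenedDegree_iff hTΓ hpre hFG hF hG hf hg hfg m,
    sum_thickenedDegree_left hbip hf hg m, sum_thickenedDegree_right hbip hf hg m⟩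

/-- Let `Γ` be a connected bipartite graph with bipartition `(F, G)`.
For every `t ≥ n` there exists `a ∈ ℕ^n` with all entries positive such that `F` and `G`
are the only facets of the degree complex `Δ_a(I^t)` and
`Σ_{i ∈ F} a_i = Σ_{i ∈ G} a_i = t - 1`. -/
theorem stmt4 (k : Type) [Field k] (n : ℕ) (Γ : SimpleGraph (Fin n))
    (hiso : NoIsolated Γ) (hconn : Γ.Connected)
    (F G : Finset (Fin n)) (hdisj : Disjoint F G) (hunion : F ∪ G = Finset.univ)
    (hF : IsIndep Γ F) (hG : IsIndep Γ G)
    (t : ℕ) (ht : n ≤ t) :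
    ∃ a : Fin n → ℕ, (∀ i, 0 < a i) ∧
      IsFacet (degComplex k ((edgeIdeal k Γ) ^ t) a) F ∧
      IsFacet (degComplex k ((edgeIdeal k Γ) ^ t) a) G ∧
      (∀ H : Finset (Fin n),
        IsFacet (degComplex k ((edgeIdeal k Γ) ^ t) a) H → H = F ∨ H = G) ∧
      ∑ i ∈ F, a i = t - 1 ∧ ∑ i ∈ G, a i = t - 1 := by
  obtain ⟨a, hpos, hfacet, hsum⟩ := stmt4_general k hiso hconn
    ⟨hdisj, codisjoint_iff.2 hunion⟩ hF hG ((Fintype.card_fin n).trans_le ht)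
  exact ⟨a, hpos, (hfacet F).2 (.inl rfl), (hfacet G).2 (.inr rfl), fun H => (hfacet H).1, hsum⟩

end
end
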